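/- Let X be a complex Banach space, T a bounded linear operator on X, and β an ordinal. Then 0 ∉ acc^{β+1} σ(T) if and only if there exists a bounded linear operator S on X with ST = TS, S²T = S, and acc^β σ(T − T²S) ⊆ {0}. -/

import Mathlib

open Ordinal Set

/-- The `α`-th Cantor–Bendixson derivative of a set `A ⊆ ℂ`, defined by transfinite
recursion: `cbd A 0 = A`, `cbd A (β+1) = derivedSet (cbd A β)` (the set of accumulation
points of `cbd A β`), and `cbd A α = ⋂_{β < α} cbd A β` for limit ordinals `α`. -/
noncomputable def cbd (A : Set ℂ) (α : Ordinal) : Set ℂ :=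
  Ordinal.limitRecOn α A (fun _ ih => derivedSet ih)
    (fun α _ ih => ⋂ (β : Set.Iio α), ih β.1 β.2)

variable {X : Type*} [NormedAddCommGroup X] [NormedSpace ℂ X] [CompleteSpace X]

/-- The restriction `T_M` of a bounded operator `T` to a `T`-invariant subspace `M`. -/
noncomputable def restr (T : X →L[ℂ] X) (M : Submodule ℂ X)
    (hM : ∀ x ∈ M, T x ∈ M) : M →L[ℂ] M :=
  { toLinearMap := T.toLinearMap.restrict hM
    cont := (T.continuous.comp continuous_subtype_val).subtype_mk _ }

/-!
Countability lets one separate the part of the spectrum near `0` by a circle: a closed set `K ⊆ ℂ`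
is the union of a countable set and a perfect set, and the perfect part survives all derivatives,
so `K \ acc^β K` is countable. If `0 ∉ acc^{β+1} σ(a)`, some small circle around `0` therefore
misses `σ(a)`, and its Riesz projection `q` cuts off the part of the spectrum inside. On the range
of `1 - q` the element `a` is invertible, and its inverse there, extended by `0`, is the required
pseudoinverse `s`; moreover `a - a²s = aq`, whose nonzero spectrum is that of `a` inside the circle.

Conversely, `p = as` is idempotent and `a` is invertible on the range of `p`, hence so is `z - a`
for small `z`. Near `0` the spectrum of `a` is thus contained in that of `a(1 - p) = a - a²s`, and
membership in a derivative is a local property.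
-/

open Filter Topology Metric

section CantorBendixson

lemma cbd_zero (s : Set ℂ) : cbd s 0 = s :=
  Ordinal.limitRecOn_zero ..

lemma cbd_add_one (s : Set ℂ) (α : Ordinal) : cbd s (α + 1) = derivedSet (cbd s α) :=
  Ordinal.limitRecOn_add_one ..

lemma cbd_of_isSuccLimit (s : Set ℂ) {α : Ordinal} (hα : Order.IsSuccLimit α) :
    cbd s α = ⋂ β : Iio α, cbd s β :=
  Ordinal.limitRecOn_limit (h := hα) ..

lemma mem_cbd_of_eventually {s t : Set ℂ} {x : ℂ} {α : Ordinal}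
    (hst : ∀ᶠ y in 𝓝 x, y ∈ s → y ∈ t) (hx : x ∈ cbd s α) : x ∈ cbd t α := by
  induction α using Ordinal.limitRecOn generalizing x with
  | zero =>
    rw [cbd_zero] at hx ⊢
    exact hst.self_of_nhds hx
  | add_one α ih =>
    rw [cbd_add_one, mem_derivedSet, accPt_iff_frequently] at hx ⊢
    exact hx.mp (hst.eventually_nhds.mono fun y hy ⟨hyx, hys⟩ => ⟨hyx, ih hy hys⟩)
  | limit α hα ih =>
    rw [cbd_of_isSuccLimit _ hα, mem_iInter] at hx ⊢
    exact fun β => ih β β.2 hst (hx β)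

lemma cbd_subset_of_isClosed {s : Set ℂ} (hs : IsClosed s) (α : Ordinal) : cbd s α ⊆ s := by
  induction α using Ordinal.limitRecOn with
  | zero => rw [cbd_zero]
  | add_one α ih =>
    rw [cbd_add_one]
    exact (derivedSet_mono _ _ ih).trans ((isClosed_iff_derivedSet_subset s).1 hs)
  | limit α hα ih =>
    rw [cbd_of_isSuccLimit _ hα]
    exact (iInter_subset _ ⟨0, hα.bot_lt⟩).trans (ih 0 hα.bot_lt)

lemma subset_cbd_of_preperfect {s t : Set ℂ} (hs : Preperfect s) (hst : s ⊆ t) (α : Ordinal) :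
    s ⊆ cbd t α := by
  induction α using Ordinal.limitRecOn with
  | zero => rwa [cbd_zero]
  | add_one α ih =>
    rw [cbd_add_one]
    exact (preperfect_iff_subset_derivedSet.1 hs).trans (derivedSet_mono _ _ ih)
  | limit α hα ih =>
    rw [cbd_of_isSuccLimit _ hα]
    exact subset_iInter fun β => ih β β.2

lemma countable_diff_cbd {s : Set ℂ} (hs : IsClosed s) (α : Ordinal) :
    (s \ cbd s α).Countable := by
  obtain ⟨V, D, hV, hD, rfl⟩ := exists_countable_union_perfect_of_isClosed hs
  refine hV.mono fun x hx => hx.1.resolve_right fun hxD => hx.2 ?_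
  exact subset_cbd_of_preperfect hD.acc subset_union_right α hxD

lemma exists_sphere_disjoint_of_notMem_cbd {s : Set ℂ} (hs : IsClosed s) {x : ℂ} {α : Ordinal}
    (hx : x ∉ cbd s (α + 1)) :
    ∃ r > 0, Disjoint (sphere x r) s ∧ closedBall x r ∩ cbd s α ⊆ {x} := by
  rw [cbd_add_one, mem_derivedSet, accPt_iff_frequently, not_frequently,
    eventually_nhds_iff_ball] at hx
  obtain ⟨ε, hε, hball⟩ := hx
  have hball' : ∀ y ∈ ball x ε, y ∈ cbd s α → y = x := fun y hy hys =>
    by_contra fun hyx => hball y hy ⟨hyx, hys⟩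
  obtain ⟨r, hr, hr0, hrε⟩ :=
    (((countable_diff_cbd hs α).image (dist · x)).dense_compl ℝ).exists_between hε
  refine ⟨r, hr0, disjoint_left.2 fun y hy hys => ?_, fun y hy =>
    hball' y (closedBall_subset_ball hrε hy.1) hy.2⟩
  refine hr ⟨y, ⟨hys, fun hyc => ?_⟩, hy⟩
  exact ne_of_mem_sphere hy hr0.ne' (hball' y (sphere_subset_ball hrε hy) hyc)

end CantorBendixson

section IsUnitOn

/-- For an idempotent `p`, this says that `a` commutes with `p` and is invertible on the range of
`p`, i.e. that `a * p` is a unit of the corner `p R p`. The witness itself need not lie in the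
corner, which lets the witnesses for complementary idempotents simply be added. -/
def IsUnitOn {R : Type*} [Mul R] (p a : R) : Prop :=
  ∃ b, a * b = p ∧ b * a = p

namespace IsUnitOn

lemma commute {R : Type*} [Semigroup R] {p a : R} (h : IsUnitOn p a) : Commute p a := by
  obtain ⟨b, hab, hba⟩ := h
  calc p * a = a * (b * a) := by rw [← hab, mul_assoc]
    _ = a * p := by rw [hba]

lemma congr {R : Type*} [Semigroup R] {p a b : R} (h : IsUnitOn p a) (hp : IsIdempotentElem p)
    (hpb : Commute p b) (hab : a * p = b * p) : IsUnitOn p b := by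
  obtain ⟨c, hac, hca⟩ := h
  have hpc : p * c = c * p := (commute ⟨a, hca, hac⟩).eq
  refine ⟨c * p, ?_, ?_⟩
  · calc b * (c * p) = b * p * c := by rw [← hpc, mul_assoc]
      _ = a * c * p := by rw [← hab, mul_assoc, hpc, mul_assoc]
      _ = p := by rw [hac, hp.eq]
  · calc c * p * b = c * (b * p) := by rw [mul_assoc, hpb.eq]
      _ = c * a * p := by rw [← hab, mul_assoc]
      _ = p := by rw [hca, hp.eq]

lemma mul_isUnit {M : Type*} [Monoid M] {p a u : M} (h : IsUnitOn p a) (hu : IsUnit u)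
    (hpu : Commute p u) : IsUnitOn p (a * u) := by
  obtain ⟨b, hab, hba⟩ := h
  obtain ⟨u, rfl⟩ := hu
  refine ⟨↑u⁻¹ * b, by rw [mul_assoc, Units.mul_inv_cancel_left, hab], ?_⟩
  rw [mul_assoc, ← mul_assoc b, hba, hpu.eq, Units.inv_mul_cancel_left]

lemma add {R : Type*} [NonUnitalNonAssocSemiring R] {p q a : R} (hp : IsUnitOn p a)
    (hq : IsUnitOn q a) : IsUnitOn (p + q) a := by
  obtain ⟨b, hab, hba⟩ := hp
  obtain ⟨c, hac, hca⟩ := hq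
  exact ⟨b + c, by rw [mul_add, hab, hac], by rw [add_mul, hba, hca]⟩

lemma neg {R : Type*} [NonUnitalNonAssocRing R] {p a : R} (h : IsUnitOn p a) :
    IsUnitOn p (-a) := by
  obtain ⟨b, hab, hba⟩ := h
  exact ⟨-b, by rw [neg_mul_neg, hab], by rw [neg_mul_neg, hba]⟩

end IsUnitOn

lemma isUnitOn_of_isUnit {M : Type*} [Monoid M] {p u : M} (hu : IsUnit u) (hpu : Commute p u) :
    IsUnitOn p u := by
  obtain ⟨u, rfl⟩ := hu
  exact ⟨↑u⁻¹ * p, u.mul_inv_cancel_left p, by rw [mul_assoc, hpu.eq, u.inv_mul_cancel_left]⟩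

lemma isUnit_of_isUnitOn_of_isUnitOn_one_sub {R : Type*} [Ring R] {p a : R} (hp : IsUnitOn p a)
    (hq : IsUnitOn (1 - p) a) : IsUnit a := by
  obtain ⟨b, hab, hba⟩ := hp.add hq
  exact isUnit_iff_exists.2 ⟨b, by simpa using hab, by simpa using hba⟩

lemma exists_commuting_outer_inverse_iff {R : Type*} [Semigroup R] {a p : R} :
    (∃ s, s * a = a * s ∧ s * s * a = s ∧ a * s = p) ↔ IsIdempotentElem p ∧ IsUnitOn p a := by
  constructor
  · rintro ⟨s, hsa, hssa, rfl⟩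
    refine ⟨?_, s, rfl, hsa⟩
    calc a * s * (a * s) = a * (s * (s * a)) := by rw [mul_assoc, hsa]
      _ = a * s := by rw [← mul_assoc s, hssa]
  · rintro ⟨hp, h⟩
    have hpa : p * a = a * p := h.commute.eq
    obtain ⟨b, hab, hba⟩ := h
    have hleft : b * p * a = p := by rw [mul_assoc, hpa, ← mul_assoc, hba, hp.eq]
    have hright : a * (b * p) = p := by rw [← mul_assoc, hab, hp.eq]
    exact ⟨b * p, hleft.trans hright.symm, by rw [mul_assoc, hleft, mul_assoc, hp.eq], hright⟩

end IsUnitOn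

section Compression

variable {A : Type*}

lemma isUnitOn_algebraMap_sub_of_mem_resolventSet_mul {𝕜 : Type*} [CommRing 𝕜] [Ring A]
    [Algebra 𝕜 A] {a q : A} {z : 𝕜} (hq : IsIdempotentElem q) (hqa : Commute q a)
    (hz : z ∈ resolventSet 𝕜 (a * q)) : IsUnitOn q (algebraMap 𝕜 A z - a) := by
  have hqz : Commute q (algebraMap 𝕜 A z) := Algebra.commute_algebraMap_right z q
  refine (isUnitOn_of_isUnit hz (hqz.sub_right (hqa.mul_right (.refl q)))).congr hq
    (hqz.sub_right hqa) ?_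
  rw [sub_mul, sub_mul, mul_assoc a, hq.eq]

lemma mem_resolventSet_mul_of_isUnitOn {𝕜 : Type*} [Field 𝕜] [Ring A] [Algebra 𝕜 A] {a q : A}
    {z : 𝕜} (hz : z ≠ 0) (hq : IsIdempotentElem q) (hqa : Commute q a)
    (h : IsUnitOn q (algebraMap 𝕜 A z - a)) : z ∈ resolventSet 𝕜 (a * q) := by
  have hcomm {p : A} (hp : Commute p (a * q)) : Commute p (algebraMap 𝕜 A z - a * q) :=
    (Algebra.commute_algebraMap_right z p).sub_right hp
  have hqaq : Commute q (a * q) := hqa.mul_right (.refl q)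
  have hz_unit : IsUnit (algebraMap 𝕜 A z) := hz.isUnit.map _
  refine isUnit_of_isUnitOn_of_isUnitOn_one_sub (p := q)
    (h.congr hq (hcomm hqaq) ?_)
    ((isUnitOn_of_isUnit hz_unit (Algebra.commute_algebraMap_right z _)).congr hq.one_sub
      (hcomm ((Commute.one_left _).sub_left hqaq)) ?_)
  · rw [sub_mul, sub_mul, mul_assoc a, hq.eq]
  · rw [sub_mul, mul_assoc a, hq.mul_one_sub_self, mul_zero, _root_.sub_zero]

variable {𝕜 : Type*} [NontriviallyNormedField 𝕜] [NormedRing A] [NormedAlgebra 𝕜 A]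
  [CompleteSpace A]

lemma eventually_isUnitOn_algebraMap_sub {a p : A} (hp : IsIdempotentElem p) (h : IsUnitOn p a) :
    ∀ᶠ z in 𝓝 (0 : 𝕜), IsUnitOn p (algebraMap 𝕜 A z - a) := by
  obtain ⟨s, hsa, -, hasp⟩ := exists_commuting_outer_inverse_iff.2 ⟨hp, h⟩
  have hps : Commute p s := hasp ▸ Commute.mul_left hsa.symm (.refl s)
  have hunit : ∀ᶠ z in 𝓝 (0 : 𝕜), IsUnit (1 - z • s) := by
    have hcont : Continuous fun z : 𝕜 => 1 - z • s := by fun_prop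
    exact hcont.continuousAt.eventually_mem (Units.isOpen.mem_nhds (by simp))
  filter_upwards [hunit] with z hz
  -- On the range of `p`, where `s` inverts `a`, one has `z - a = -a (1 - z s)`.
  refine (h.mul_isUnit hz ((Commute.one_right p).sub_right (hps.smul_right z))).neg.congr hp
    ((Algebra.commute_algebraMap_right z p).sub_right h.commute) ?_
  rw [_root_.mul_sub, mul_one, mul_smul_comm, hasp, neg_sub, sub_mul, sub_mul, smul_mul_assoc,
    hp.eq, ← Algebra.smul_def]

lemma eventually_mem_spectrum_mul_one_sub {a p : A} (hp : IsIdempotentElem p)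
    (h : IsUnitOn p a) :
    ∀ᶠ z in 𝓝 (0 : 𝕜), z ∈ spectrum 𝕜 a → z ∈ spectrum 𝕜 (a * (1 - p)) := by
  filter_upwards [eventually_isUnitOn_algebraMap_sub hp h] with z hz hza hz_mem
  exact hza (isUnit_of_isUnitOn_of_isUnitOn_one_sub hz
    (isUnitOn_algebraMap_sub_of_mem_resolventSet_mul hp.one_sub
      ((Commute.one_left a).sub_left h.commute) hz_mem))

end Compression

section CircleIntegral

variable {c w : ℂ} {r : ℝ}

lemma circleIntegral_comp_comm {E F : Type*} [NormedAddCommGroup E] [NormedSpace ℂ E]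
    [CompleteSpace E] [NormedAddCommGroup F] [NormedSpace ℂ F] [CompleteSpace F] (L : E →L[ℂ] F)
    {f : ℂ → E} (hf : CircleIntegrable f c r) :
    ∮ z in C(c, r), L (f z) = L (∮ z in C(c, r), f z) := by
  simp only [circleIntegral, ← L.intervalIntegral_comp_comm hf.out, map_smul]

lemma commute_circleIntegral {A : Type*} [NormedRing A] [NormedAlgebra ℂ A] [CompleteSpace A]
    {a : A} {f : ℂ → A} (hr : 0 ≤ r) (hf : CircleIntegrable f c r)
    (h : ∀ z ∈ sphere c r, Commute a (f z)) : Commute a (∮ z in C(c, r), f z) :=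
  calc a * ∮ z in C(c, r), f z = ∮ z in C(c, r), a * f z :=
        (circleIntegral_comp_comm (ContinuousLinearMap.mul ℂ A a) hf).symm
    _ = ∮ z in C(c, r), f z * a := circleIntegral.integral_congr hr h
    _ = (∮ z in C(c, r), f z) * a :=
        circleIntegral_comp_comm ((ContinuousLinearMap.mul ℂ A).flip a) hf

lemma continuousOn_sub_inv_sphere (hw : w ∉ sphere c r) :
    ContinuousOn (fun z => (z - w)⁻¹) (sphere c r) :=
  ContinuousOn.inv₀ (by fun_prop) fun _ hz hzw => hw (sub_eq_zero.1 hzw ▸ hz)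

lemma circleIntegral_sub_inv_of_notMem_closedBall (hr : 0 ≤ r) (hw : w ∉ closedBall c r) :
    ∮ z in C(c, r), (z - w)⁻¹ = 0 := by
  have hd : DifferentiableOn ℂ (fun z => (z - w)⁻¹) (closedBall c r) :=
    DifferentiableOn.inv (by fun_prop) fun _ hz hzw => hw (sub_eq_zero.1 hzw ▸ hz)
  exact (hd.mono closure_ball_subset_closedBall).diffContOnCl.circleIntegral_eq_zero hr

end CircleIntegral

section Riesz

variable {A : Type*} [NormedRing A] [NormedAlgebra ℂ A]

/-- The Riesz projection `(2πi)⁻¹ ∮ (z - a)⁻¹ dz` of `a`, which singles out the part of the spectrum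
of `a` inside the circle of centre `c` and radius `r`. -/
noncomputable def rieszProjection (a : A) (c : ℂ) (r : ℝ) : A :=
  (2 * Real.pi * Complex.I : ℂ)⁻¹ • ∮ z in C(c, r), resolvent a z

/-- The Cauchy transform `w ↦ (2πi)⁻¹ ∮ (z - w)⁻¹ (z - a)⁻¹ dz` of the resolvent of `a` on a circle.
For `w` inside the circle it is the inverse of `w - a` on the range of the complement of the Riesz
projection; for `w` outside it is minus the inverse of `w - a` on the range of that projection. -/
noncomputable def resolventCauchyTransform (a : A) (c : ℂ) (r : ℝ) (w : ℂ) : A :=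
  (2 * Real.pi * Complex.I : ℂ)⁻¹ • ∮ z in C(c, r), (z - w)⁻¹ • resolvent a z

variable {a : A} {c w : ℂ} {r : ℝ}

lemma commute_resolvent (a : A) (z : ℂ) : Commute a (resolvent a z) := by
  by_cases hz : z ∈ resolventSet ℂ a
  · rw [spectrum.resolvent_eq hz]
    exact ((Algebra.commute_algebraMap_right z a).sub_right (.refl a)).units_inv_right
  · rw [spectrum.resolvent_zero_of_mem_spectrum hz]
    exact .zero_right a

variable [CompleteSpace A]

lemma differentiableAt_resolvent (hw : w ∈ resolventSet ℂ a) :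
    DifferentiableAt ℂ (resolvent a) w :=
  (spectrum.hasDerivAt_resolvent_const_left hw).differentiableAt

lemma continuousOn_resolvent : ContinuousOn (resolvent a) (resolventSet ℂ a) := fun _ hz =>
  (differentiableAt_resolvent hz).continuousAt.continuousWithinAt

lemma circleIntegrable_resolvent (hr : 0 ≤ r) (h : sphere c r ⊆ resolventSet ℂ a) :
    CircleIntegrable (resolvent a) c r :=
  (continuousOn_resolvent.mono h).circleIntegrable hr

lemma circleIntegrable_sub_inv_smul_resolvent (hr : 0 ≤ r) (h : sphere c r ⊆ resolventSet ℂ a)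
    (hw : w ∉ sphere c r) : CircleIntegrable (fun z => (z - w)⁻¹ • resolvent a z) c r :=
  ((continuousOn_sub_inv_sphere hw).smul (continuousOn_resolvent.mono h)).circleIntegrable hr

lemma commute_rieszProjection (hr : 0 ≤ r) (h : sphere c r ⊆ resolventSet ℂ a) :
    Commute (rieszProjection a c r) a :=
  ((commute_circleIntegral hr (circleIntegrable_resolvent hr h) fun z _ =>
    commute_resolvent a z).smul_right _).symm

lemma commute_resolventCauchyTransform (hr : 0 ≤ r) (h : sphere c r ⊆ resolventSet ℂ a)
    (hw : w ∉ sphere c r) : Commute a (resolventCauchyTransform a c r w) :=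
  (commute_circleIntegral hr (circleIntegrable_sub_inv_smul_resolvent hr h hw) fun z _ =>
    (commute_resolvent a z).smul_right _).smul_right _

lemma algebraMap_sub_mul_resolventCauchyTransform (hr : 0 ≤ r)
    (h : sphere c r ⊆ resolventSet ℂ a) (hw : w ∉ sphere c r) :
    (algebraMap ℂ A w - a) * resolventCauchyTransform a c r w =
      ((2 * Real.pi * Complex.I : ℂ)⁻¹ * ∮ z in C(c, r), (z - w)⁻¹) • 1
        - rieszProjection a c r := by
  have hpt : ∀ z ∈ sphere c r, (algebraMap ℂ A w - a) * ((z - w)⁻¹ • resolvent a z) =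
      (z - w)⁻¹ • 1 - resolvent a z := fun z hz => by
    have hzw : z - w ≠ 0 := sub_ne_zero.2 fun hzw => hw (hzw ▸ hz)
    have hres : (algebraMap ℂ A z - a) * resolvent a z = 1 := Ring.mul_inverse_cancel _ (h hz)
    have hsplit : (algebraMap ℂ A w - a) * resolvent a z = 1 - (z - w) • resolvent a z := by
      rw [← hres, Algebra.smul_def, map_sub, ← sub_mul, sub_sub_sub_cancel_left]
    rw [mul_smul_comm, hsplit, smul_sub, inv_smul_smul₀ hzw]
  have hint : CircleIntegrable (fun z => (z - w)⁻¹ • (1 : A)) c r :=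
    ((continuousOn_sub_inv_sphere hw).smul continuousOn_const).circleIntegrable hr
  have hmul : (algebraMap ℂ A w - a) * ∮ z in C(c, r), (z - w)⁻¹ • resolvent a z =
      (∮ z in C(c, r), (z - w)⁻¹) • 1 - ∮ z in C(c, r), resolvent a z := by
    rw [← circleIntegral.integral_smul_const, ← circleIntegral.integral_sub hint
      (circleIntegrable_resolvent hr h), ← circleIntegral.integral_congr hr hpt]
    exact (circleIntegral_comp_comm (ContinuousLinearMap.mul ℂ A _)
      (circleIntegrable_sub_inv_smul_resolvent hr h hw)).symm
  rw [resolventCauchyTransform, rieszProjection, mul_smul_comm, hmul, smul_sub, smul_smul]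

lemma algebraMap_sub_mul_resolventCauchyTransform_of_mem_ball
    (h : sphere c r ⊆ resolventSet ℂ a) (hw : w ∈ ball c r) :
    (algebraMap ℂ A w - a) * resolventCauchyTransform a c r w = 1 - rieszProjection a c r := by
  rw [algebraMap_sub_mul_resolventCauchyTransform (pos_of_mem_ball hw).le h
    (sphere_disjoint_ball.notMem_of_mem_right hw), circleIntegral.integral_sub_inv_of_mem_ball hw,
    inv_mul_cancel₀ Complex.two_pi_I_ne_zero, one_smul]

lemma isUnitOn_one_sub_rieszProjection (h : sphere c r ⊆ resolventSet ℂ a) (hw : w ∈ ball c r) :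
    IsUnitOn (1 - rieszProjection a c r) (algebraMap ℂ A w - a) := by
  have hmul := algebraMap_sub_mul_resolventCauchyTransform_of_mem_ball h hw
  have hcomm := commute_resolventCauchyTransform (pos_of_mem_ball hw).le h
    (sphere_disjoint_ball.notMem_of_mem_right hw)
  exact ⟨_, hmul, ((Algebra.commute_algebraMap_left w _).sub_left hcomm).symm.eq.trans hmul⟩

lemma isUnitOn_rieszProjection (hr : 0 ≤ r) (h : sphere c r ⊆ resolventSet ℂ a)
    (hw : w ∉ closedBall c r) : IsUnitOn (rieszProjection a c r) (algebraMap ℂ A w - a) := by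
  have hw' : w ∉ sphere c r := fun hws => hw (sphere_subset_closedBall hws)
  have hmul : (algebraMap ℂ A w - a) * -resolventCauchyTransform a c r w =
      rieszProjection a c r := by
    rw [mul_neg, algebraMap_sub_mul_resolventCauchyTransform hr h hw',
      circleIntegral_sub_inv_of_notMem_closedBall hr hw, mul_zero, zero_smul,
      _root_.zero_sub, neg_neg]
  have hcomm := (commute_resolventCauchyTransform hr h hw').neg_right
  exact ⟨_, hmul, ((Algebra.commute_algebraMap_left w _).sub_left hcomm).symm.eq.trans hmul⟩

lemma differentiableOn_resolventCauchyTransform (h : sphere c r ⊆ resolventSet ℂ a) :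
    DifferentiableOn ℂ (resolventCauchyTransform a c r) (ball c r) := by
  rcases le_or_gt r 0 with hr | hr
  · rw [ball_eq_empty.2 hr]
    exact differentiableOn_empty
  lift r to NNReal using hr.le
  have hpow := hasFPowerSeriesOn_cauchy_integral (circleIntegrable_resolvent hr.le h) hr
  rw [← eball_coe]
  exact hpow.differentiableOn

/-- The resolvent on the range of `1 - q`, for `q` the Riesz projection, extends holomorphically
to the disk. -/
lemma circleIntegral_resolvent_mul_one_sub_rieszProjection (hr : 0 ≤ r)
    (h : sphere c r ⊆ resolventSet ℂ a) :
    ∮ z in C(c, r), resolvent a z * (1 - rieszProjection a c r) = 0 := by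
  classical
  set q := rieszProjection a c r
  set g := (ball c r).piecewise (resolventCauchyTransform a c r) fun z => resolvent a z * (1 - q)
  have hball : EqOn g (resolventCauchyTransform a c r) (ball c r) := piecewise_eqOn ..
  have hres : EqOn g (fun z => resolvent a z * (1 - q)) (resolventSet ℂ a) := fun z hz => by
    by_cases hzb : z ∈ ball c r
    · have hinv : resolvent a z * (algebraMap ℂ A z - a) = 1 := Ring.inverse_mul_cancel _ hz
      simp only [hball hzb, q,
        ← algebraMap_sub_mul_resolventCauchyTransform_of_mem_ball h hzb, ← mul_assoc, hinv,
        one_mul]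
    · exact piecewise_eq_of_notMem _ _ _ hzb
  have hg : DifferentiableOn ℂ g (closedBall c r) := fun z hz => by
    refine DifferentiableAt.differentiableWithinAt ?_
    rcases (ball_union_sphere (x := c) (ε := r)).symm ▸ hz with hzb | hzs
    · exact ((differentiableOn_resolventCauchyTransform h).differentiableAt
        (isOpen_ball.mem_nhds hzb)).congr_of_eventuallyEq
          (hball.eventuallyEq_of_mem (isOpen_ball.mem_nhds hzb))
    · exact ((differentiableAt_resolvent (h hzs)).mul_const (1 - q)).congr_of_eventuallyEq
        (hres.eventuallyEq_of_mem ((spectrum.isOpen_resolventSet a).mem_nhds (h hzs)))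
  rw [← circleIntegral.integral_congr hr (hres.mono h)]
  exact (hg.mono closure_ball_subset_closedBall).diffContOnCl.circleIntegral_eq_zero hr

lemma isIdempotentElem_rieszProjection (hr : 0 ≤ r) (h : sphere c r ⊆ resolventSet ℂ a) :
    IsIdempotentElem (rieszProjection a c r) := by
  set q := rieszProjection a c r with hq
  have hint : (∮ z in C(c, r), resolvent a z) * (1 - q) = 0 :=
    (circleIntegral_comp_comm ((ContinuousLinearMap.mul ℂ A).flip (1 - q))
      (circleIntegrable_resolvent hr h)).symm.trans
        (circleIntegral_resolvent_mul_one_sub_rieszProjection hr h)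
  rw [isIdempotentElem_iff_mul_one_sub_self]
  nth_rw 1 [hq]
  rw [rieszProjection, smul_mul_assoc, hint, smul_zero]

lemma mem_spectrum_of_mem_spectrum_mul_rieszProjection (hr : 0 ≤ r)
    (h : sphere c r ⊆ resolventSet ℂ a) (hw : w ∈ spectrum ℂ (a * rieszProjection a c r))
    (hw0 : w ≠ 0) :
    w ∈ spectrum ℂ a ∩ closedBall c r := by
  have hq := isIdempotentElem_rieszProjection hr h
  have hqa := commute_rieszProjection hr h
  refine ⟨fun hwa => hw ?_, by_contra fun hwc => hw ?_⟩
  · exact mem_resolventSet_mul_of_isUnitOn hw0 hq hqa (isUnitOn_of_isUnit hwa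
      ((Algebra.commute_algebraMap_right w _).sub_right hqa))
  · exact mem_resolventSet_mul_of_isUnitOn hw0 hq hqa (isUnitOn_rieszProjection hr h hwc)

end Riesz

section Pseudoinverse

variable {A : Type*} [NormedRing A] [NormedAlgebra ℂ A] [CompleteSpace A]

lemma exists_idempotent_of_notMem_cbd {a : A} {β : Ordinal}
    (h : (0 : ℂ) ∉ cbd (spectrum ℂ a) (β + 1)) :
    ∃ p, (IsIdempotentElem p ∧ IsUnitOn p a) ∧ cbd (spectrum ℂ (a * (1 - p))) β ⊆ {0} := by
  obtain ⟨r, hr, hsphere, hball⟩ := exists_sphere_disjoint_of_notMem_cbd (spectrum.isClosed a) h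
  have hres : sphere 0 r ⊆ resolventSet ℂ a := fun z hz =>
    not_not.1 (hsphere.notMem_of_mem_left hz)
  refine ⟨1 - rieszProjection a 0 r,
    ⟨(isIdempotentElem_rieszProjection hr.le hres).one_sub, ?_⟩, fun z hz => ?_⟩
  · simpa using (isUnitOn_one_sub_rieszProjection hres (mem_ball_self hr)).neg
  · rw [sub_sub_cancel] at hz
    have hmem {w : ℂ} := mem_spectrum_of_mem_spectrum_mul_rieszProjection (w := w) hr.le hres
    by_contra hz0
    have hz_ball := (hmem (cbd_subset_of_isClosed (spectrum.isClosed _) β hz) hz0).2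
    have hz_cbd : z ∈ cbd (spectrum ℂ a) β :=
      mem_cbd_of_eventually ((eventually_ne_nhds hz0).mono fun w hw0 hw => (hmem hw hw0).1) hz
    exact hz0 (hball ⟨hz_ball, hz_cbd⟩)

lemma notMem_cbd_add_one_of_isUnitOn {a p : A} {β : Ordinal} (hp : IsIdempotentElem p)
    (h : IsUnitOn p a) (hβ : cbd (spectrum ℂ (a * (1 - p))) β ⊆ {0}) :
    (0 : ℂ) ∉ cbd (spectrum ℂ a) (β + 1) := fun h0 => by
  have h0' := mem_cbd_of_eventually (eventually_mem_spectrum_mul_one_sub hp h) h0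
  rw [cbd_add_one] at h0'
  have hacc : AccPt (0 : ℂ) (𝓟 {0}) := derivedSet_mono _ _ hβ h0'
  obtain ⟨z, hz, hz0⟩ := (accPt_iff_frequently.1 hacc).exists
  exact hz hz0

theorem not_mem_cbd_succ_iff_exists_pseudoinverse_general (a : A) (β : Ordinal) :
    (0 : ℂ) ∉ cbd (spectrum ℂ a) (β + 1) ↔
      ∃ s : A, s * a = a * s ∧ s * s * a = s ∧
        cbd (spectrum ℂ (a - a * a * s)) β ⊆ {0} := by
  have hcompl (s : A) : a - a * a * s = a * (1 - a * s) := by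
    rw [_root_.mul_sub, mul_one, mul_assoc]
  simp only [hcompl]
  constructor
  · intro h
    obtain ⟨p, hp, hβ⟩ := exists_idempotent_of_notMem_cbd h
    obtain ⟨s, hsa, hssa, rfl⟩ := exists_commuting_outer_inverse_iff.2 hp
    exact ⟨s, hsa, hssa, hβ⟩
  · rintro ⟨s, hsa, hssa, hβ⟩
    obtain ⟨hp, hunit⟩ := exists_commuting_outer_inverse_iff.1 ⟨s, hsa, hssa, rfl⟩
    exact notMem_cbd_add_one_of_isUnitOn hp hunit hβ

end Pseudoinverse

/-- `0 ∉ acc^{β+1} σ(T)` iff there is `S` commuting with `T` with `S²T = S` and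
`acc^β σ(T - T²S) ⊆ {0}`. -/
theorem not_mem_cbd_succ_iff_exists_pseudoinverse (T : X →L[ℂ] X) (β : Ordinal) :
    (0 : ℂ) ∉ cbd (spectrum ℂ T) (β + 1) ↔
      ∃ S : X →L[ℂ] X, S * T = T * S ∧ S * S * T = S ∧
        cbd (spectrum ℂ (T - T * T * S)) β ⊆ {0} :=
  not_mem_cbd_succ_iff_exists_pseudoinverse_general T β
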